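/- Let f ∈ ℂ[x,y,z,w] be a reduced homogeneous polynomial of degree d defining a surface D: f = 0 in P³ which is tame with respect to a pair of syzygies ρ1, ρ2 of degrees e1 = deg ρ1 ≤ e2 = deg ρ2, and assume e1 + 2e2 ≤ d − 1 and that the singular locus Σ of D is 1-dimensional, i.e., there exist integers a, b with m(f)_k = a·k + b for all sufficiently large k, and deg Σ = a. Set e3 = d − 1 − e1 − e2, s1 = e1 + e2 + e3 and s2 = e1e2 + e1e3 + e2e3. Then deg Σ ≤ s1² − s2, and equality holds if and only if D is a free surface (with exponents e1, e2, e3). -/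

import Mathlib

open MvPolynomial Matrix

noncomputable section

/-- The polynomial ring `S = ℂ[x,y,z,w]`. -/
abbrev S4 : Type := MvPolynomial (Fin 4) ℂ

/-- The `S`-linear map sending `ρ = (α,β,γ,δ)` to `α fₓ + β f_y + γ f_z + δ f_w`. -/
def jacPair (f : S4) : (Fin 4 → S4) →ₗ[S4] S4 where
  toFun ρ := ∑ i, ρ i * pderiv i f
  map_add' a b := by simp [add_mul, Finset.sum_add_distrib]
  map_smul' c a := by simp [Finset.mul_sum, mul_assoc]

/-- `AR(f)`: the `S`-module of all Jacobian syzygies of `f`. -/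
def AR4 (f : S4) : Submodule S4 (Fin 4 → S4) := LinearMap.ker (jacPair f)

/-- A vector of polynomials is homogeneous of degree `q` if each component is. -/
def VecHomog (ρ : Fin 4 → S4) (q : ℕ) : Prop := ∀ i, (ρ i).IsHomogeneous q

/-- `AR(f)_k`, the degree-`k` homogeneous part of `AR(f)`, as a `ℂ`-subspace. -/
def ARgr (f : S4) (k : ℕ) : Submodule ℂ (Fin 4 → S4) :=
  (AR4 f).restrictScalars ℂ ⊓ Submodule.pi Set.univ (fun _ => homogeneousSubmodule (Fin 4) ℂ k)

/-- `ar(f)_k = dim_ℂ AR(f)_k`. -/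
def arDim (f : S4) (k : ℕ) : ℕ := Module.finrank ℂ (ARgr f k)

/-- `ar(f)_q` for an integer index, with the convention that it vanishes for `q < 0`. -/
def arZ (f : S4) (q : ℤ) : ℕ := if 0 ≤ q then arDim f q.toNat else 0

/-- The Jacobian ideal of `f`. -/
def JacIdeal (f : S4) : Ideal S4 := Ideal.span (Set.range fun i : Fin 4 => pderiv i f)

/-- `m(f)_k = dim_ℂ M(f)_k`, the dimension of the degree-`k` part of the Milnor algebra. -/
def milnor4 (f : S4) (k : ℕ) : ℕ :=
  Module.finrank ℂ ((homogeneousSubmodule (Fin 4) ℂ k).map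
    (Submodule.mkQ ((JacIdeal f).restrictScalars ℂ)))

/-- `binom(m,3)` with the convention that it is `0` for `m < 3`. -/
def binom3 (m : ℤ) : ℕ := m.toNat.choose 3

/-- All four `3×3` minors of the `3×4` matrix with rows `ρ1, ρ2, ρ` vanish. -/
def MinorsVanish3 (ρ1 ρ2 ρ : Fin 4 → S4) : Prop :=
  ∀ j : Fin 4,
    (Matrix.of fun i k => ![ρ1, ρ2, ρ] i (j.succAbove k) : Matrix (Fin 3) (Fin 3) S4).det = 0

/-- `D : f = 0` is tame with respect to `ρ1, ρ2`: every homogeneous syzygy `ρ` for which all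
`3×3` minors of the matrix with rows `ρ1, ρ2, ρ` vanish lies in `S·ρ1 + S·ρ2`. -/
def TamePair (f : S4) (ρ1 ρ2 : Fin 4 → S4) : Prop :=
  ∀ ρ ∈ AR4 f, ∀ q : ℕ, VecHomog ρ q → MinorsVanish3 ρ1 ρ2 ρ →
    ∃ a b : S4, ρ = a • ρ1 + b • ρ2

/-- `ρ1` is a nonzero homogeneous syzygy of minimal degree `e1`, and `ρ2` is a homogeneous
syzygy of minimal degree `e2 ≥ e1` among the homogeneous syzygies not in `S·ρ1`. -/
def MinimalPair (f : S4) (ρ1 ρ2 : Fin 4 → S4) (e1 e2 : ℕ) : Prop :=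
  ρ1 ∈ AR4 f ∧ ρ1 ≠ 0 ∧ VecHomog ρ1 e1 ∧
  (∀ ρ ∈ AR4 f, ∀ q : ℕ, ρ ≠ 0 → VecHomog ρ q → e1 ≤ q) ∧
  ρ2 ∈ AR4 f ∧ VecHomog ρ2 e2 ∧ e1 ≤ e2 ∧ (∀ a : S4, ρ2 ≠ a • ρ1) ∧
  (∀ ρ ∈ AR4 f, ∀ q : ℕ, VecHomog ρ q → (∀ a : S4, ρ ≠ a • ρ1) → e2 ≤ q)

/-- `D : f = 0` is a free surface with exponents `d1 ≤ d2 ≤ d3`: `AR(f)` is a free graded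
`S`-module with a homogeneous basis of degrees `d1, d2, d3`. -/
def IsFreeWith (f : S4) (d1 d2 d3 : ℕ) : Prop :=
  d1 ≤ d2 ∧ d2 ≤ d3 ∧
  ∃ ρ1 ρ2 ρ3 : Fin 4 → S4,
    ρ1 ∈ AR4 f ∧ ρ2 ∈ AR4 f ∧ ρ3 ∈ AR4 f ∧
    VecHomog ρ1 d1 ∧ VecHomog ρ2 d2 ∧ VecHomog ρ3 d3 ∧
    (∀ ρ ∈ AR4 f, ∃ a b c : S4, ρ = a • ρ1 + b • ρ2 + c • ρ3) ∧
    (∀ a b c : S4, a • ρ1 + b • ρ2 + c • ρ3 = 0 → a = 0 ∧ b = 0 ∧ c = 0)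

/-- `D : f = 0` is a nearly free surface with exponents `d1 ≤ d2 ≤ d3` (`d4 = d3`):
`AR(f)` is generated by four homogeneous syzygies of degrees `d1, d2, d3, d3`,
with `d3 = d - (d1 + d2)`, whose module of relations is generated by a single relation
`a₁ρ₁ + a₂ρ₂ + a₃ρ₃ + a₄ρ₄ = 0` with `a₁, a₂, a₃, a₄` homogeneous of degrees
`d3-d1+1, d3-d2+1, 1, 1`. -/
def IsNearlyFreeWith (f : S4) (d d1 d2 d3 : ℕ) : Prop :=
  d1 ≤ d2 ∧ d2 ≤ d3 ∧ d1 + d2 + d3 = d ∧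
  ∃ (ρ : Fin 4 → Fin 4 → S4) (a : Fin 4 → S4),
    (∀ i, ρ i ∈ AR4 f) ∧
    VecHomog (ρ 0) d1 ∧ VecHomog (ρ 1) d2 ∧ VecHomog (ρ 2) d3 ∧ VecHomog (ρ 3) d3 ∧
    (∀ σ ∈ AR4 f, ∃ b : Fin 4 → S4, σ = ∑ i, b i • ρ i) ∧
    (a 0).IsHomogeneous (d3 - d1 + 1) ∧ (a 1).IsHomogeneous (d3 - d2 + 1) ∧
    (a 2).IsHomogeneous 1 ∧ (a 3).IsHomogeneous 1 ∧
    a ≠ 0 ∧ (∑ i, a i • ρ i) = 0 ∧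
    (∀ b : Fin 4 → S4, (∑ i, b i • ρ i) = 0 → ∃ c : S4, b = c • a)

/-- `D : f = 0` is tame: it is tame with respect to some pair `ρ1, ρ2` chosen as in the paper. -/
def IsTame (f : S4) : Prop :=
  ∃ (ρ1 ρ2 : Fin 4 → S4) (e1 e2 : ℕ), MinimalPair f ρ1 ρ2 e1 e2 ∧ TamePair f ρ1 ρ2

/-- The `4×4` matrix with rows the Euler vector field `(x,y,z,w)` and `ρ1, ρ2, ρ`. -/
def EMat (ρ1 ρ2 ρ : Fin 4 → S4) : Matrix (Fin 4) (Fin 4) S4 :=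
  Matrix.of ![fun i => X i, ρ1, ρ2, ρ]

/-!
By Euler's formula and squarefreeness, `det (E, ρ1, ρ2, ρ) = f * g` for every `ρ ∈ AR(f)`; the
factors `g` form an ideal `I`, and tameness says exactly that
`0 → S(-e1) ⊕ S(-e2) → AR(f) → I(-e3) → 0` is exact. Comparing Hilbert functions,
`dim (S/I)_{k-e3} = (s₁² - s₂ - a) k + const` for large `k`, so `a ≤ s₁² - s₂`.

If equality holds, the Hilbert function of `S/I` is bounded. A prime `P ⊇ I` then contains all the
linear forms vanishing at some point of `P³` (or all the variables), since two independent linear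
forms in the domain `S/P` would give `k + 1` independent monomials in each degree `k`. But three
such forms are a regular sequence, and a Koszul chase in the exact sequence shows that they cannot
multiply an element outside `I` into `I`; so `S/I` has no associated prime, that is, `I = S`. An
element `ρ3` with `det (E, ρ1, ρ2, ρ3) = f` completes a basis of `AR(f)` (Saito's criterion).
-/

section Homogeneous

variable {σ κ R : Type*}

theorem homogeneousComponent_mul_of_isHomogeneous [CommSemiring R] {F : MvPolynomial σ R} {m : ℕ}
    (hF : F.IsHomogeneous m) (q : ℕ) (g : MvPolynomial σ R) :
    homogeneousComponent (q + m) (g * F) = homogeneousComponent q g * F := by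
  let := MvPolynomial.gradedAlgebra (σ := σ) (R := R)
  have hdecompose (p : MvPolynomial σ R) (i : ℕ) :
      (DirectSum.decompose (homogeneousSubmodule σ R) p i : MvPolynomial σ R) =
        homogeneousComponent i p := decomposition.decompose'_apply p i
  rw [← hdecompose, ← hdecompose]
  exact DirectSum.coe_decompose_mul_add_of_right_mem _ ((mem_homogeneousSubmodule m F).2 hF)

theorem isHomogeneous_of_mul_right [CommRing R] [IsDomain R] {g F : MvPolynomial σ R} {m n : ℕ}
    (hF : F.IsHomogeneous m) (hF0 : F ≠ 0) (h : (g * F).IsHomogeneous (n + m)) :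
    g.IsHomogeneous n := by
  have hg : homogeneousComponent n g * F = g * F := by
    rw [← homogeneousComponent_mul_of_isHomogeneous hF, homogeneousComponent_eq_self h]
  exact mul_right_cancel₀ hF0 hg ▸ homogeneousComponent_isHomogeneous n g

theorem isHomogeneous_det [CommRing R] {n : Type*} [Fintype n] [DecidableEq n]
    {A : Matrix n n (MvPolynomial σ R)} {e : n → ℕ} (hA : ∀ i j, (A i j).IsHomogeneous (e i)) :
    A.det.IsHomogeneous (∑ i, e i) := by
  rw [Matrix.det_apply']
  refine IsHomogeneous.sum _ _ _ fun τ _ => ?_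
  have hprod : (∏ i, A (τ i) i).IsHomogeneous (∑ i, e (τ i)) :=
    IsHomogeneous.prod _ _ _ fun i _ => hA _ _
  rw [Equiv.sum_comp τ e] at hprod
  simpa using hprod.C_mul ((Equiv.Perm.sign τ : ℤ) : R)

/-- The degree-`k` homogeneous component of a vector of polynomials, taken entrywise. -/
def vecComponent [CommSemiring R] (k : ℕ) :
    (κ → MvPolynomial σ R) →ₗ[R] κ → MvPolynomial σ R :=
  LinearMap.pi fun i => homogeneousComponent k ∘ₗ LinearMap.proj i

variable [CommSemiring R]

@[simp]
theorem vecComponent_apply (k : ℕ) (v : κ → MvPolynomial σ R) (i : κ) :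
    vecComponent k v i = homogeneousComponent k (v i) :=
  rfl

theorem vecComponent_isHomogeneous (k : ℕ) (v : κ → MvPolynomial σ R) (i : κ) :
    (vecComponent k v i).IsHomogeneous k :=
  homogeneousComponent_isHomogeneous k (v i)

theorem vecComponent_eq_self {k : ℕ} {v : κ → MvPolynomial σ R} (hv : ∀ i, (v i).IsHomogeneous k) :
    vecComponent k v = v :=
  funext fun i => homogeneousComponent_eq_self (hv i)

theorem vecComponent_smul {m : ℕ} {v : κ → MvPolynomial σ R} (hv : ∀ i, (v i).IsHomogeneous m)
    (k : ℕ) (a : MvPolynomial σ R) :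
    vecComponent (k + m) (a • v) = homogeneousComponent k a • v :=
  funext fun i => homogeneousComponent_mul_of_isHomogeneous (hv i) k a

theorem vecComponent_ne_zero {v : κ → MvPolynomial σ R} {i : κ} (hi : v i ≠ 0) :
    vecComponent (v i).totalDegree v ≠ 0 := by
  intro h
  obtain ⟨m, hm, hdeg⟩ := Finset.exists_mem_eq_sup (v i).support (by simpa using hi)
    (fun s : σ →₀ ℕ => s.sum fun _ e => e)
  have hcoeff := congrArg (coeff m) (congrFun h i)
  rw [vecComponent_apply, coeff_homogeneousComponent,
    if_pos (show m.degree = (v i).totalDegree from hdeg.symm)] at hcoeff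
  exact mem_support_iff.1 hm hcoeff

variable [Finite κ]

theorem exists_sum_vecComponent (v : κ → MvPolynomial σ R) :
    ∃ N, ∑ k ∈ Finset.range N, vecComponent k v = v := by
  cases nonempty_fintype κ
  refine ⟨(Finset.univ.sup fun i => (v i).totalDegree) + 1, funext fun i => ?_⟩
  have hle : (v i).totalDegree ≤ Finset.univ.sup fun i => (v i).totalDegree :=
    Finset.le_sup (f := fun i => (v i).totalDegree) (Finset.mem_univ i)
  rw [Finset.sum_apply]
  conv_rhs => rw [← sum_homogeneousComponent (v i)]
  refine (Finset.sum_subset (Finset.range_subset_range.2 (by lia)) fun k _ hk => ?_).symm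
  exact homogeneousComponent_eq_zero _ _ (by simpa using hk)

theorem map_vecComponent [DecidableEq κ]
    {ψ : (κ → MvPolynomial σ R) →ₗ[MvPolynomial σ R] MvPolynomial σ R} {m : ℕ}
    (hψ : ∀ i, (ψ (Pi.single i 1)).IsHomogeneous m) (k : ℕ) (v : κ → MvPolynomial σ R) :
    ψ (vecComponent k v) = homogeneousComponent (k + m) (ψ v) := by
  cases nonempty_fintype κ
  have hψ_apply (u : κ → MvPolynomial σ R) : ψ u = ∑ i, u i * ψ (Pi.single i 1) := by
    conv_lhs => rw [pi_eq_sum_univ' u]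
    simp
  simp only [hψ_apply v, hψ_apply (vecComponent k v), map_sum, vecComponent_apply,
    homogeneousComponent_mul_of_isHomogeneous (hψ _)]

end Homogeneous

section Squarefree

variable {σ K : Type*}

theorem totalDegree_pderiv_lt [CommSemiring K] {p : MvPolynomial σ K} {i : σ}
    (h : pderiv i p ≠ 0) :
    (pderiv i p).totalDegree < p.totalDegree := by
  obtain ⟨m, hm, hdeg⟩ := Finset.exists_mem_eq_sup (pderiv i p).support (by simpa using h)
    (fun s : σ →₀ ℕ => s.sum fun _ e => e)
  rw [mem_support_iff, coeff_pderiv] at hm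
  have hle := le_totalDegree (mem_support_iff.2 (left_ne_zero_of_mul hm))
  rw [Finsupp.sum_add_index' (by simp) (by simp), Finsupp.sum_single_index rfl] at hle
  exact (hdeg.trans_lt (Nat.lt_succ_self _)).trans_le hle

variable [Field K]

theorem isUnit_of_totalDegree_eq_zero {p : MvPolynomial σ K} (hp : p ≠ 0)
    (h : p.totalDegree = 0) : IsUnit p := by
  rw [totalDegree_eq_zero_iff_eq_C] at h
  exact isUnit_iff_eq_C_of_isReduced.2
    ⟨_, isUnit_iff_ne_zero.2 fun h0 => hp (by rw [h, h0, C_0]), h⟩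

variable [CharZero K]

theorem exists_pderiv_ne_zero {p : MvPolynomial σ K} (h : p.totalDegree ≠ 0) :
    ∃ i, pderiv i p ≠ 0 := by
  obtain ⟨m, hm, i, hi⟩ : ∃ m ∈ p.support, ∃ i, m i ≠ 0 := by
    by_contra! hsupp
    exact h ((totalDegree_eq_zero_iff (p := p)).2 fun m hm i => hsupp m hm i)
  refine ⟨i, fun h0 => ?_⟩
  have hcoeff := coeff_pderiv (i := i) p (m - Finsupp.single i 1)
  rw [h0, coeff_zero, tsub_add_cancel_of_le
    (Finsupp.single_le_iff.2 (Nat.one_le_iff_ne_zero.2 hi))] at hcoeff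
  exact mul_ne_zero (mem_support_iff.1 hm) (Nat.cast_add_one_ne_zero _) hcoeff.symm

theorem exists_not_dvd_pderiv {f p : MvPolynomial σ K} (hf : Squarefree f) (hp : Prime p)
    (hpf : p ∣ f) : ∃ j, ¬ p ∣ pderiv j f := by
  obtain ⟨g, rfl⟩ := hpf
  obtain ⟨j, hj⟩ := exists_pderiv_ne_zero fun h0 =>
    hp.not_isUnit (isUnit_of_totalDegree_eq_zero hp.ne_zero h0)
  refine ⟨j, fun hdvd => ?_⟩
  rw [pderiv_mul, dvd_add_left (dvd_mul_right _ _)] at hdvd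
  rcases hp.dvd_or_dvd hdvd with h | h
  · exact (totalDegree_le_of_dvd_of_isDomain h hj).not_gt (totalDegree_pderiv_lt hj)
  · exact hp.not_isUnit (hf p (mul_dvd_mul_left p h))

theorem dvd_of_forall_dvd_mul_pderiv {f M : MvPolynomial σ K} (hf : Squarefree f)
    (h : ∀ j, f ∣ M * pderiv j f) : f ∣ M := by
  obtain ⟨u, m, c, hum, hcu, hcm⟩ :=
    UniqueFactorizationMonoid.exists_reduced_factors f hf.ne_zero M
  have hc : c ≠ 0 := left_ne_zero_of_mul (hcu ▸ hf.ne_zero)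
  have hu_dvd (j : σ) : u ∣ pderiv j f := by
    have hj := h j
    rw [← hcm, mul_assoc, ← hcu, mul_dvd_mul_iff_left hc, hcu] at hj
    exact hum.dvd_of_dvd_mul_left hj
  have hu : IsUnit u := by
    by_contra hu
    obtain ⟨p, hp, hpu⟩ := WfDvdMonoid.exists_irreducible_factor hu
      (right_ne_zero_of_mul (hcu ▸ hf.ne_zero))
    obtain ⟨j, hj⟩ := exists_not_dvd_pderiv hf hp.prime (hpu.trans ⟨c, by rw [← hcu, mul_comm]⟩)
    exact hj (hpu.trans (hu_dvd j))
  rw [← hcu, ← hcm]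
  exact mul_dvd_mul_left c hu.dvd

end Squarefree

section Koszul

variable {R V N ι : Type*} [CommRing R] [AddCommGroup V] [Module R V] [AddCommGroup N] [Module R N]

-- If `u • n = ψ α`, `v • n = ψ β` and `w • n = ψ γ`, then `v • α - u • β`, `w • α - u • γ` and
-- `w • β - v • γ` lie in `ker ψ` and satisfy the Koszul relation of `u`, `v`, `w`.
theorem mem_map_of_koszul {A : Submodule R V} {ψ : V →ₗ[R] N} {u v w : R} {n : N}
    (hu : IsSMulRegular N u)
    (huv : ∀ a ∈ A, ∀ b ∈ A, v • a = u • b → ∃ c ∈ A, a = u • c)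
    (hker : ∀ p ∈ A ⊓ LinearMap.ker ψ, ∀ q ∈ A ⊓ LinearMap.ker ψ, ∀ r ∈ A ⊓ LinearMap.ker ψ,
      w • p = v • q - u • r →
        ∃ s ∈ A ⊓ LinearMap.ker ψ, ∃ t ∈ A ⊓ LinearMap.ker ψ, p = u • s + v • t)
    (hun : u • n ∈ A.map ψ) (hvn : v • n ∈ A.map ψ) (hwn : w • n ∈ A.map ψ) : n ∈ A.map ψ := by
  obtain ⟨α, hα, hαn⟩ := hun
  obtain ⟨β, hβ, hβn⟩ := hvn
  obtain ⟨γ, hγ, hγn⟩ := hwn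
  have hmem {x y : R} {a b : V} (ha : a ∈ A) (hb : b ∈ A) (hab : x • ψ a = y • ψ b) :
      x • a - y • b ∈ A ⊓ LinearMap.ker ψ :=
    ⟨sub_mem (A.smul_mem x ha) (A.smul_mem y hb), by simp [hab]⟩
  obtain ⟨s, hs, t, ht, hst⟩ := hker
    (v • α - u • β) (hmem hα hβ (by rw [hαn, hβn, smul_comm]))
    (w • α - u • γ) (hmem hα hγ (by rw [hαn, hγn, smul_comm]))
    (w • β - v • γ) (hmem hβ hγ (by rw [hβn, hγn, smul_comm])) (by module)
  obtain ⟨c, hcA, hc⟩ := huv (α - t) (sub_mem hα ht.1) (β + s) (add_mem hβ hs.1)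
    (by linear_combination (norm := module) hst)
  refine ⟨c, hcA, hu ?_⟩
  change u • ψ c = u • n
  rw [← map_smul, ← hc, map_sub, LinearMap.mem_ker.1 ht.2, sub_zero, hαn]

theorem exists_eq_smul_add_smul_of_isPrime [Finite ι] {r : ι → V} (hr : LinearIndependent R r)
    {u v w : R} (huv : (Ideal.span {u, v}).IsPrime) (hw : w ∉ Ideal.span {u, v}) {p q q' : V}
    (hp : p ∈ Submodule.span R (Set.range r)) (hq : q ∈ Submodule.span R (Set.range r))
    (hq' : q' ∈ Submodule.span R (Set.range r)) (h : w • p = v • q - u • q') :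
    ∃ s ∈ Submodule.span R (Set.range r), ∃ t ∈ Submodule.span R (Set.range r),
      p = u • s + v • t := by
  cases nonempty_fintype ι
  obtain ⟨a, rfl⟩ := (Submodule.mem_span_range_iff_exists_fun R).1 hp
  obtain ⟨b, rfl⟩ := (Submodule.mem_span_range_iff_exists_fun R).1 hq
  obtain ⟨b', rfl⟩ := (Submodule.mem_span_range_iff_exists_fun R).1 hq'
  have hcoord (j : ι) : w * a j = v * b j - u * b' j := by
    refine sub_eq_zero.1 (Fintype.linearIndependent_iff.1 hr
      (fun j => w * a j - (v * b j - u * b' j)) ?_ j)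
    simp only [sub_smul, mul_smul, Finset.sum_sub_distrib, ← Finset.smul_sum, h, sub_self]
  have hmem (j : ι) : a j ∈ Ideal.span {u, v} :=
    (huv.mem_or_mem (hcoord j ▸ Ideal.mem_span_pair.2 ⟨-b' j, b j, by ring⟩)).resolve_left hw
  choose s t hst using fun j => Ideal.mem_span_pair.1 (hmem j)
  refine ⟨∑ j, s j • r j, (Submodule.mem_span_range_iff_exists_fun R).2 ⟨s, rfl⟩,
    ∑ j, t j • r j, (Submodule.mem_span_range_iff_exists_fun R).2 ⟨t, rfl⟩, ?_⟩
  simp only [Finset.smul_sum, ← Finset.sum_add_distrib, ← hst, smul_smul, ← add_smul, mul_comm]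

end Koszul

section LineForm

variable {σ R : Type*} [CommRing R]

theorem sub_aeval_mem_span (g : σ → MvPolynomial σ R) (p : MvPolynomial σ R) :
    p - aeval g p ∈ Ideal.span (Set.range fun j => X j - g j) := by
  rw [← Ideal.Quotient.eq]
  have heq : Ideal.Quotient.mkₐ R (Ideal.span (Set.range fun j => X j - g j)) =
      (Ideal.Quotient.mkₐ R _).comp (aeval g) :=
    algHom_ext fun j => by
      simpa using (Ideal.Quotient.mk_eq_mk_iff_sub_mem (X j) (g j)).2
        (Ideal.subset_span (Set.mem_range_self j))
  exact AlgHom.congr_fun heq p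

/-- The linear form `X j - c j * X i`. For fixed `i`, the forms with `j ≠ i` cut out the line
through the point whose `i`-th coordinate is `1` and whose other coordinates are the `c j`. -/
def lineForm (c : σ → R) (i j : σ) : MvPolynomial σ R := X j - C (c j) * X i

/-- The substitution `X j ↦ c j * X i` for `j ∈ T`, fixing the other variables. Its kernel is the
ideal generated by the forms `lineForm c i j` with `j ∈ T`. -/
def collapse (c : σ → R) (i : σ) (T : Finset σ) [DecidableEq σ] :
    MvPolynomial σ R →ₐ[R] MvPolynomial σ R :=
  aeval fun j => if j ∈ T then C (c j) * X i else X j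

variable {c : σ → R} {i p : σ} {T : Finset σ}

theorem collapse_lineForm_of_mem [DecidableEq σ] (hi : i ∉ T) (hp : p ∈ T) :
    collapse c i T (lineForm c i p) = 0 := by
  simp [collapse, lineForm, hi, hp, ← algebraMap_eq]

theorem collapse_lineForm_of_notMem [DecidableEq σ] (hi : i ∉ T) (hp : p ∉ T) :
    collapse c i T (lineForm c i p) = lineForm c i p := by
  simp [collapse, lineForm, hi, hp, ← algebraMap_eq]

theorem ker_collapse [DecidableEq σ] (hi : i ∉ T) :
    RingHom.ker (collapse c i T) = Ideal.span (lineForm c i '' T) := by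
  refine le_antisymm (fun p hp => ?_) (Ideal.span_le.2 ?_)
  · have hmem := sub_aeval_mem_span (fun j => if j ∈ T then C (c j) * X i else X j) p
    change p - collapse c i T p ∈ _ at hmem
    rw [RingHom.mem_ker.1 hp, sub_zero] at hmem
    refine Ideal.span_le.2 ?_ hmem
    rintro _ ⟨j, rfl⟩
    by_cases hj : j ∈ T
    · simp only [if_pos hj]
      exact Ideal.subset_span (Set.mem_image_of_mem (lineForm c i) hj)
    · simp [hj]
  · rintro _ ⟨j, hj, rfl⟩
    exact collapse_lineForm_of_mem hi hj

theorem lineForm_ne_zero [Nontrivial R] (hp : p ≠ i) : lineForm c i p ≠ 0 := by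
  intro h
  classical
  have hcoeff := congrArg (coeff (Finsupp.single p 1)) h
  simp [lineForm, coeff_C_mul, coeff_X, Finsupp.single_left_inj, hp.symm] at hcoeff

theorem isPrime_span_lineForm [IsDomain R] (hi : i ∉ T) :
    (Ideal.span (lineForm c i '' T)).IsPrime := by
  classical
  exact ker_collapse (R := R) hi ▸ RingHom.ker_isPrime _

theorem lineForm_notMem_span [Nontrivial R] (hi : i ∉ T) (hp : p ∉ T) (hpi : p ≠ i) :
    lineForm c i p ∉ Ideal.span (lineForm c i '' T) := by
  classical
  rw [← ker_collapse hi, RingHom.mem_ker, collapse_lineForm_of_notMem hi hp]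
  exact lineForm_ne_zero hpi

end LineForm

section HilbertFunction

theorem linearIndependent_pow_of_transcendental {R A : Type*} [CommRing R] [CommRing A]
    [Algebra R A] {z : A} (hz : Transcendental R z) : LinearIndependent R fun n : ℕ => z ^ n := by
  have hmap := (Polynomial.basisMonomials R).linearIndependent.map'
    (Polynomial.aeval z).toLinearMap (LinearMap.ker_eq_bot.2 (transcendental_iff_injective.1 hz))
  simpa [Function.comp_def, ← Polynomial.X_pow_eq_monomial] using hmap

theorem linearIndependent_pow_mul_pow {K B : Type*} [Field K] [IsAlgClosed K] [CommRing B]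
    [IsDomain B] [Algebra K B] {x y : B} (hy : y ≠ 0) (hxy : ∀ t : K, x ≠ t • y) (k : ℕ) :
    LinearIndependent K fun m : Fin (k + 1) => x ^ (m : ℕ) * y ^ (k - m) := by
  let L := FractionRing B
  set z : L := algebraMap B L x / algebraMap B L y with hz
  have hy' : algebraMap B L y ≠ 0 := by simpa using hy
  have htrans : Transcendental K z := by
    intro halg
    obtain ⟨t, ht⟩ := halg.isIntegral.mem_range_algebraMap_of_minpoly_splits
      (IsAlgClosed.splits _ : ((minpoly K z).map (algebraMap K K)).Splits)
    refine hxy t (IsFractionRing.injective B L ?_)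
    rw [Algebra.smul_def, map_mul, ← IsScalarTower.algebraMap_apply, ht, hz, div_mul_cancel₀ _ hy']
  have hpow := linearIndependent_pow_of_transcendental htrans
  refine LinearIndependent.of_comp (IsScalarTower.toAlgHom K B L).toLinearMap ?_
  convert! (hpow.comp _ Fin.val_injective).map' (LinearMap.mulLeft K (algebraMap B L y ^ k))
    (LinearMap.ker_eq_bot.2 (mul_right_injective₀ (pow_ne_zero k hy'))) using 1
  funext m
  simp only [Function.comp_apply, AlgHom.toLinearMap_apply, IsScalarTower.coe_toAlgHom', map_mul,
    map_pow, LinearMap.mulLeft_apply, hz, div_pow, pow_sub₀ _ hy' (Nat.lt_succ_iff.1 m.2)]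
  ring

variable {σ K : Type*} [Field K]

/-- The Hilbert function `k ↦ dim_K (S/I)_k` of the quotient of `S = K[x_i]` by an ideal `I`. -/
def hilbertFun (I : Ideal (MvPolynomial σ K)) (k : ℕ) : ℕ :=
  Module.finrank K ((homogeneousSubmodule σ K k).map (Submodule.mkQ (I.restrictScalars K)))

variable [Finite σ]

instance (k : ℕ) : FiniteDimensional K (homogeneousSubmodule σ K k) :=
  Module.Finite.iff_fg.2 (homogeneousSubmodule_fg σ K k)

theorem card_le_hilbertFun {I : Ideal (MvPolynomial σ K)} {k : ℕ} {ι : Type*} [Fintype ι]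
    {v : ι → MvPolynomial σ K} (hv : ∀ m, (v m).IsHomogeneous k)
    (hli : LinearIndependent K fun m => Ideal.Quotient.mkₐ K I (v m)) :
    Fintype.card ι ≤ hilbertFun I k := by
  have hcod : LinearIndependent K fun m =>
      (⟨Submodule.mkQ (I.restrictScalars K) (v m), Submodule.mem_map_of_mem (hv m)⟩ :
        (homogeneousSubmodule σ K k).map (Submodule.mkQ (I.restrictScalars K))) :=
    LinearIndependent.of_comp (Submodule.subtype _) hli
  exact hcod.fintype_card_le_finrank

theorem exists_sub_smul_X_mem_of_isPrime [IsAlgClosed K] {I P : Ideal (MvPolynomial σ K)}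
    (hP : P.IsPrime) (hIP : I ≤ P) {k : ℕ} (hk : hilbertFun I k ≤ k) {i : σ} (hi : X i ∉ P)
    (j : σ) : ∃ t : K, X j - C t * X i ∈ P := by
  by_contra! hj
  have hli : LinearIndependent K fun m : Fin (k + 1) =>
      Ideal.Quotient.mkₐ K P (X j) ^ (m : ℕ) * Ideal.Quotient.mkₐ K P (X i) ^ (k - m) := by
    refine linearIndependent_pow_mul_pow (by simpa [Ideal.Quotient.eq_zero_iff_mem] using hi)
      (fun t ht => hj t ?_) k
    rw [← map_smul, smul_eq_C_mul] at ht
    exact (Ideal.Quotient.mk_eq_mk_iff_sub_mem _ _).1 ht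
  have hcard := card_le_hilbertFun (I := I)
    (v := fun m : Fin (k + 1) => X j ^ (m : ℕ) * X i ^ (k - m))
    (fun m => by
      have hhom := (isHomogeneous_X_pow (R := K) j m).mul (isHomogeneous_X_pow i (k - m))
      rwa [Nat.add_sub_cancel' (Nat.lt_succ_iff.1 m.2)] at hhom)
    (LinearIndependent.of_comp (Ideal.Quotient.factorₐ K hIP).toLinearMap (by
      simpa [Function.comp_def] using hli))
  rw [Fintype.card_fin] at hcard
  lia

theorem exists_lineForm_mem_of_isPrime [IsAlgClosed K] [Nonempty σ]
    {I P : Ideal (MvPolynomial σ K)} (hP : P.IsPrime) (hIP : I ≤ P) {k : ℕ}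
    (hk : hilbertFun I k ≤ k) : ∃ (i : σ) (c : σ → K), ∀ j, lineForm c i j ∈ P := by
  by_cases hX : ∀ j : σ, X j ∈ P
  · exact ⟨Classical.arbitrary σ, 0, fun j => by simpa [lineForm] using hX j⟩
  · obtain ⟨i, hi⟩ := not_forall.1 hX
    choose c hc using exists_sub_smul_X_mem_of_isPrime hP hIP hk hi
    exact ⟨i, c, hc⟩

end HilbertFunction

theorem eq_top_of_hilbertFun_le {σ K : Type*} [Finite σ] [Nonempty σ] [Field K] [IsAlgClosed K]
    {I : Ideal (MvPolynomial σ K)} {k : ℕ} (hk : hilbertFun I k ≤ k)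
    (hI : ∀ (i : σ) (c : σ → K) (g), (∀ j ≠ i, lineForm c i j * g ∈ I) → g ∈ I) : I = ⊤ := by
  by_contra hne
  have : Nontrivial (MvPolynomial σ K ⧸ I) := Ideal.Quotient.nontrivial_iff.2 hne
  obtain ⟨P, hP⟩ := associatedPrimes.nonempty (MvPolynomial σ K) (MvPolynomial σ K ⧸ I)
  obtain ⟨hprime, x, hx⟩ := isAssociatedPrime_iff.1 hP
  obtain ⟨g, rfl⟩ := Ideal.Quotient.mk_surjective x
  have hmem (p : MvPolynomial σ K) : p ∈ P ↔ p * g ∈ I := by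
    rw [hx, Submodule.mem_colon_singleton, Submodule.mem_bot, ← Ideal.Quotient.eq_zero_iff_mem,
      map_mul]
    rfl
  obtain ⟨i, c, hc⟩ := exists_lineForm_mem_of_isPrime hprime
    (fun p hp => (hmem p).2 (I.mul_mem_right g hp)) hk
  refine hprime.ne_top (P.eq_top_iff_one.2 ((hmem 1).2 ?_))
  simpa using hI i c g fun j _ => (hmem _).1 (hc j)

section SaitoDeterminant

/-- The Saito determinant `ρ ↦ det (E, ρ1, ρ2, ρ)`, with `E` the Euler vector field. -/
def saitoDet (ρ1 ρ2 : Fin 4 → S4) : (Fin 4 → S4) →ₗ[S4] S4 :=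
  Matrix.detRowAlternating.toMultilinearMap.toLinearMap ![X, ρ1, ρ2, 0] 3

variable {f : S4} {d : ℕ} {ρ1 ρ2 ρ : Fin 4 → S4}

theorem saitoDet_apply (ρ1 ρ2 ρ : Fin 4 → S4) : saitoDet ρ1 ρ2 ρ = (EMat ρ1 ρ2 ρ).det := by
  refine congrArg (Matrix.det (R := S4) (n := Fin 4)) (funext fun i => ?_)
  fin_cases i <;> rfl

theorem saitoDet_isHomogeneous {e1 e2 e : ℕ} (h1 : VecHomog ρ1 e1) (h2 : VecHomog ρ2 e2)
    (h : VecHomog ρ e) : (saitoDet ρ1 ρ2 ρ).IsHomogeneous (e + (e1 + e2 + 1)) := by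
  have hrow (i j : Fin 4) : (EMat ρ1 ρ2 ρ i j).IsHomogeneous (![1, e1, e2, e] i) := by
    fin_cases i
    exacts [isHomogeneous_X ℂ j, h1 j, h2 j, h j]
  have hdegree : ∑ i : Fin 4, ![1, e1, e2, e] i = e + (e1 + e2 + 1) := by
    simp only [Fin.sum_univ_four, Matrix.cons_val]
    ring
  exact saitoDet_apply ρ1 ρ2 ρ ▸ hdegree ▸ isHomogeneous_det hrow

theorem saitoDet_single_isHomogeneous {e1 e2 : ℕ} (h1 : VecHomog ρ1 e1) (h2 : VecHomog ρ2 e2)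
    (i : Fin 4) : (saitoDet ρ1 ρ2 (Pi.single i 1)).IsHomogeneous (e1 + e2 + 1) := by
  refine zero_add (e1 + e2 + 1) ▸ saitoDet_isHomogeneous h1 h2 fun j => ?_
  rw [Pi.single_apply]
  split_ifs
  exacts [isHomogeneous_one _ _, isHomogeneous_zero _ _ _]

theorem saitoDet_left (ρ1 ρ2 : Fin 4 → S4) : saitoDet ρ1 ρ2 ρ1 = 0 := by
  rw [saitoDet_apply]
  exact Matrix.det_zero_of_row_eq (i := 1) (j := 3) (by decide) rfl

theorem saitoDet_right (ρ1 ρ2 : Fin 4 → S4) : saitoDet ρ1 ρ2 ρ2 = 0 := by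
  rw [saitoDet_apply]
  exact Matrix.det_zero_of_row_eq (i := 2) (j := 3) (by decide) rfl

theorem eMat_mulVec_pderiv (hf : f.IsHomogeneous d) (h1 : ρ1 ∈ AR4 f) (h2 : ρ2 ∈ AR4 f)
    (h : ρ ∈ AR4 f) :
    EMat ρ1 ρ2 ρ *ᵥ (fun i => pderiv i f) = Pi.single 0 ((d : S4) * f) := by
  funext i
  fin_cases i
  · simpa [EMat, Matrix.mulVec, dotProduct] using hf.sum_X_mul_pderiv
  · exact h1
  · exact h2
  · exact h

theorem saitoDet_mul_pderiv (hf : f.IsHomogeneous d) (h1 : ρ1 ∈ AR4 f) (h2 : ρ2 ∈ AR4 f)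
    (h : ρ ∈ AR4 f) (j : Fin 4) :
    saitoDet ρ1 ρ2 ρ * pderiv j f = (EMat ρ1 ρ2 ρ).adjugate j 0 * ((d : S4) * f) := by
  have hadj := congrArg ((EMat ρ1 ρ2 ρ).adjugate *ᵥ ·) (eMat_mulVec_pderiv hf h1 h2 h)
  rw [Matrix.mulVec_mulVec, Matrix.adjugate_mul, Matrix.smul_mulVec, Matrix.one_mulVec] at hadj
  simpa [saitoDet_apply, Matrix.mulVec_single, mul_comm] using congrFun hadj j

theorem dvd_saitoDet (hf : f.IsHomogeneous d) (hred : Squarefree f) (h1 : ρ1 ∈ AR4 f)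
    (h2 : ρ2 ∈ AR4 f) (h : ρ ∈ AR4 f) : f ∣ saitoDet ρ1 ρ2 ρ :=
  dvd_of_forall_dvd_mul_pderiv hred fun j =>
    ⟨(EMat ρ1 ρ2 ρ).adjugate j 0 * d, by rw [saitoDet_mul_pderiv hf h1 h2 h]; ring⟩

theorem minorsVanish3_of_saitoDet_eq_zero (hd : d ≠ 0) (hf : f.IsHomogeneous d) (hf0 : f ≠ 0)
    (h1 : ρ1 ∈ AR4 f) (h2 : ρ2 ∈ AR4 f) (h : ρ ∈ AR4 f) (h0 : saitoDet ρ1 ρ2 ρ = 0) :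
    MinorsVanish3 ρ1 ρ2 ρ := by
  intro j
  have hadj := saitoDet_mul_pderiv hf h1 h2 h j
  rw [h0, zero_mul, eq_comm, mul_eq_zero, or_iff_left (mul_ne_zero (Nat.cast_ne_zero.2 hd) hf0),
    Matrix.adjugate_fin_succ_eq_det_submatrix, mul_eq_zero,
    or_iff_right (pow_ne_zero _ (neg_ne_zero.2 one_ne_zero))] at hadj
  convert! hadj using 2

end SaitoDeterminant

section Syzygy

variable {f u : S4} {d e1 e2 : ℕ} {ρ ρ1 ρ2 : Fin 4 → S4}

theorem jacPair_single_isHomogeneous (hf : f.IsHomogeneous d) (i : Fin 4) :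
    (jacPair f (Pi.single i 1)).IsHomogeneous (d - 1) := by
  simpa [jacPair, Pi.single_apply] using hf.pderiv

theorem vecComponent_mem_AR4 (hf : f.IsHomogeneous d) (h : ρ ∈ AR4 f) (k : ℕ) :
    vecComponent k ρ ∈ AR4 f := by
  change jacPair f (vecComponent k ρ) = 0
  rw [map_vecComponent (jacPair_single_isHomogeneous hf), LinearMap.mem_ker.1 h, map_zero]

theorem mem_AR4_of_smul_mem (hu : u ≠ 0) (h : u • ρ ∈ AR4 f) : ρ ∈ AR4 f := by
  have hsmul : u • jacPair f ρ = 0 := by rw [← map_smul]; exact h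
  exact (smul_eq_zero.1 hsmul).resolve_left hu

namespace MinimalPair

theorem le_totalDegree (hmin : MinimalPair f ρ1 ρ2 e1 e2) (hf : f.IsHomogeneous d)
    (h : ρ ∈ AR4 f) {i : Fin 4} (hi : ρ i ≠ 0) : e1 ≤ (ρ i).totalDegree :=
  hmin.2.2.2.1 _ (vecComponent_mem_AR4 hf h _) _ (vecComponent_ne_zero hi)
    (vecComponent_isHomogeneous _ ρ)

theorem isUnit_of_eq_smul (hmin : MinimalPair f ρ1 ρ2 e1 e2) (hf : f.IsHomogeneous d)
    (hρ : ρ1 = u • ρ) : IsUnit u := by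
  have hρ1 : u • ρ ≠ 0 := hρ ▸ hmin.2.1
  have hu : u ≠ 0 := (smul_ne_zero_iff.1 hρ1).1
  obtain ⟨i, hi⟩ := Function.ne_iff.1 (smul_ne_zero_iff.1 hρ1).2
  have hle := hmin.le_totalDegree hf (mem_AR4_of_smul_mem hu (hρ ▸ hmin.1)) hi
  have hhom : (u * ρ i).IsHomogeneous e1 := by
    simpa [hρ] using hmin.2.2.1 i
  have hdeg := totalDegree_mul_of_isDomain hu hi
  rw [hhom.totalDegree (mul_ne_zero hu hi)] at hdeg
  exact isUnit_of_totalDegree_eq_zero hu (by lia)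

theorem linearIndependent (hmin : MinimalPair f ρ1 ρ2 e1 e2) (hf : f.IsHomogeneous d) :
    LinearIndependent S4 ![ρ1, ρ2] := by
  refine LinearIndependent.pair_iff.2 fun a b hab => ?_
  by_cases hb : b = 0
  · subst hb
    rw [zero_smul, add_zero] at hab
    exact ⟨(smul_eq_zero.1 hab).resolve_right hmin.2.1, rfl⟩
  exfalso
  obtain ⟨b', a', c, hcoprime, rfl, rfl⟩ :=
    UniqueFactorizationMonoid.exists_reduced_factors b hb a
  have hab' : a' • ρ1 + b' • ρ2 = 0 := by
    rw [mul_smul, mul_smul, ← smul_add] at hab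
    exact (smul_eq_zero.1 hab).resolve_left (left_ne_zero_of_mul hb)
  have hcoord (i : Fin 4) : a' * ρ1 i + b' * ρ2 i = 0 := congrFun hab' i
  have hdvd (i : Fin 4) : b' ∣ ρ1 i :=
    hcoprime.dvd_of_dvd_mul_left ⟨-ρ2 i, by linear_combination hcoord i⟩
  choose σ hσ using hdvd
  obtain ⟨b'', rfl⟩ := hmin.isUnit_of_eq_smul hf (funext hσ : ρ1 = b' • σ)
  obtain ⟨-, -, -, -, -, -, -, hρ2, -⟩ := hmin
  refine hρ2 (-(↑b''⁻¹ * a')) ?_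
  rw [neg_smul, mul_smul, eq_neg_of_add_eq_zero_left hab', smul_neg, neg_neg, smul_smul,
    Units.inv_mul, one_smul]

end MinimalPair

theorem AR4_inf_ker_saitoDet (hd : d ≠ 0) (hf : f.IsHomogeneous d) (hf0 : f ≠ 0)
    (hmin : MinimalPair f ρ1 ρ2 e1 e2) (htame : TamePair f ρ1 ρ2) :
    AR4 f ⊓ LinearMap.ker (saitoDet ρ1 ρ2) = Submodule.span S4 (Set.range ![ρ1, ρ2]) := by
  obtain ⟨h1, -, h1h, -, h2, h2h, -⟩ := hmin
  refine le_antisymm (fun ρ hρ => ?_) (Submodule.span_le.2 ?_)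
  · obtain ⟨N, hN⟩ := exists_sum_vecComponent ρ
    rw [← hN]
    refine Submodule.sum_mem _ fun k _ => ?_
    have hmem := vecComponent_mem_AR4 hf hρ.1 k
    have hdet : saitoDet ρ1 ρ2 (vecComponent k ρ) = 0 := by
      rw [map_vecComponent (saitoDet_single_isHomogeneous h1h h2h), LinearMap.mem_ker.1 hρ.2,
        map_zero]
    obtain ⟨a, b, hab⟩ := htame _ hmem k (vecComponent_isHomogeneous k ρ)
      (minorsVanish3_of_saitoDet_eq_zero hd hf hf0 h1 h2 hmem hdet)
    rw [hab, Matrix.range_cons, Matrix.range_cons, Matrix.range_empty, Set.union_empty]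
    exact Submodule.mem_span_pair.2 ⟨a, b, rfl⟩
  · rintro _ ⟨j, rfl⟩
    fin_cases j
    · exact ⟨h1, saitoDet_left ρ1 ρ2⟩
    · exact ⟨h2, saitoDet_right ρ1 ρ2⟩

end Syzygy

section SaitoIdeal

variable {f u v : S4} {d e1 e2 : ℕ} {ρ1 ρ2 : Fin 4 → S4}

/-- The ideal of all `g` such that `f * g = det (E, ρ1, ρ2, ρ)` for some `ρ ∈ AR(f)`. By Saito's
criterion it is the unit ideal iff `ρ1`, `ρ2` extend to a basis of `AR(f)`. -/
def saitoIdeal (f : S4) (ρ1 ρ2 : Fin 4 → S4) : Ideal S4 :=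
  ((AR4 f).map (saitoDet ρ1 ρ2)).comap (LinearMap.mulLeft S4 f)

theorem exists_eq_smul_of_smul_eq_smul (hu : Prime u) (huv : ¬ u ∣ v) {a b : Fin 4 → S4}
    (ha : a ∈ AR4 f) (h : v • a = u • b) : ∃ c ∈ AR4 f, a = u • c := by
  have hdvd (i : Fin 4) : u ∣ a i :=
    (hu.dvd_or_dvd ⟨b i, congrFun h i⟩).resolve_left huv
  choose c hc using hdvd
  have hac : a = u • c := funext hc
  exact ⟨c, mem_AR4_of_smul_mem hu.ne_zero (hac ▸ ha), hac⟩

theorem mem_saitoIdeal_of_lineForm_mul_mem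
    (hker : AR4 f ⊓ LinearMap.ker (saitoDet ρ1 ρ2) = Submodule.span S4 (Set.range ![ρ1, ρ2]))
    (hli : LinearIndependent S4 ![ρ1, ρ2]) (i : Fin 4) (c : Fin 4 → ℂ) (g : S4)
    (hg : ∀ j ≠ i, lineForm c i j * g ∈ saitoIdeal f ρ1 ρ2) : g ∈ saitoIdeal f ρ1 ρ2 := by
  set p := i.succAbove 0
  set q := i.succAbove 1
  set r := i.succAbove 2
  have hne {k l : Fin 3} (hkl : k ≠ l) : i.succAbove k ≠ i.succAbove l :=
    (Fin.succAbove_right_injective (p := i)).ne hkl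
  have hpi : i ∉ ({p} : Finset (Fin 4)) := by simp [p, Fin.ne_succAbove]
  have hpqi : i ∉ ({p, q} : Finset (Fin 4)) := by simp [p, q, Fin.ne_succAbove]
  have hu0 : lineForm c i p ≠ 0 := lineForm_ne_zero (Fin.succAbove_ne i 0)
  have hu : Prime (lineForm c i p) := by
    have hspan := isPrime_span_lineForm (c := c) hpi
    rwa [Finset.coe_singleton, Set.image_singleton, Ideal.span_singleton_prime hu0] at hspan
  have huv : ¬ lineForm c i p ∣ lineForm c i q := by
    have hnotMem := lineForm_notMem_span (c := c) hpi
      (Finset.notMem_singleton.2 (hne (k := 1) (l := 0) (by decide))) (Fin.succAbove_ne i 1)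
    rwa [Finset.coe_singleton, Set.image_singleton, Ideal.mem_span_singleton] at hnotMem
  have hprime := isPrime_span_lineForm (c := c) hpqi
  have hw := lineForm_notMem_span (c := c) (p := r) hpqi
    (by simp [p, q, r]) (Fin.succAbove_ne i 2)
  rw [Finset.coe_pair, Set.image_pair] at hprime hw
  have hmem (k : Fin 3) :
      lineForm c i (i.succAbove k) • (f * g) ∈ (AR4 f).map (saitoDet ρ1 ρ2) := by
    rw [smul_eq_mul, mul_left_comm]
    exact hg _ (Fin.succAbove_ne i k)
  refine mem_map_of_koszul (IsSMulRegular.of_ne_zero hu0)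
    (fun a ha b _ hab => exists_eq_smul_of_smul_eq_smul hu huv ha hab) ?_ (hmem 0) (hmem 1)
    (hmem 2)
  rw [hker]
  exact fun _ hp _ hq _ hq' h => exists_eq_smul_add_smul_of_isPrime hli hprime hw hp hq hq' h

theorem saitoIdeal_eq_top (hker : AR4 f ⊓ LinearMap.ker (saitoDet ρ1 ρ2) =
      Submodule.span S4 (Set.range ![ρ1, ρ2]))
    (hli : LinearIndependent S4 ![ρ1, ρ2]) {k : ℕ} (hk : hilbertFun (saitoIdeal f ρ1 ρ2) k ≤ k) :
    saitoIdeal f ρ1 ρ2 = ⊤ :=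
  eq_top_of_hilbertFun_le hk (mem_saitoIdeal_of_lineForm_mul_mem hker hli)

end SaitoIdeal

section GradedDimension

theorem finrank_map_add_finrank_inf_ker {K V W : Type*} [DivisionRing K] [AddCommGroup V]
    [Module K V] [AddCommGroup W] [Module K W] (U : Submodule K V) [FiniteDimensional K U]
    (g : V →ₗ[K] W) :
    Module.finrank K (U.map g) + Module.finrank K ↥(U ⊓ LinearMap.ker g) = Module.finrank K U := by
  rw [← LinearMap.finrank_range_add_finrank_ker (g.domRestrict U), LinearMap.range_domRestrict,
    LinearMap.ker_domRestrict, ← Submodule.finrank_map_subtype_eq, Submodule.map_comap_subtype]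

theorem finrank_homogeneousSubmodule (K : Type*) [Field K] (n k : ℕ) :
    Module.finrank K (homogeneousSubmodule (Fin (n + 1)) K k) = (k + n).choose n := by
  have hsupp : {m : Fin (n + 1) →₀ ℕ | m.degree = k} =
      (Finset.univ.finsuppAntidiag k : Finset (Fin (n + 1) →₀ ℕ)) := by
    ext m
    simp [Finset.mem_finsuppAntidiag, Finsupp.degree_eq_sum]
  rw [homogeneousSubmodule_eq_finsupp_supported, hsupp,
    (AddMonoidAlgebra.supportedEquivFinsupp _).finrank_eq, Module.finrank_finsupp_self]
  simp only [SetLike.coe_sort_coe, Fintype.card_coe, Finset.card_finsuppAntidiag_nat_eq_choose,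
    Finset.card_univ, Fintype.card_fin]
  rw [add_right_comm, Nat.add_sub_cancel, add_comm, Nat.choose_symm_add]

theorem six_mul_choose_three (k : ℕ) :
    6 * ((k + 3).choose 3 : ℤ) = (k + 1) * (k + 2) * (k + 3) := by
  have h := Nat.ascFactorial_eq_factorial_mul_choose k 3
  simp only [Nat.ascFactorial, Nat.factorial] at h
  zify at h
  linear_combination -h

variable {σ κ K : Type*} [Field K]

/-- The `K`-space of vectors of polynomials which are homogeneous of degree `k`. -/
def vecHomogeneousSubmodule (σ κ K : Type*) [Field K] (k : ℕ) :
    Submodule K (κ → MvPolynomial σ K) :=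
  Submodule.pi Set.univ fun _ => homogeneousSubmodule σ K k

theorem mem_vecHomogeneousSubmodule {k : ℕ} {v : κ → MvPolynomial σ K} :
    v ∈ vecHomogeneousSubmodule σ κ K k ↔ ∀ i, (v i).IsHomogeneous k := by
  simp [vecHomogeneousSubmodule, Submodule.mem_pi]

theorem map_inf_vecHomogeneousSubmodule [Finite κ] [DecidableEq κ]
    {A : Submodule (MvPolynomial σ K) (κ → MvPolynomial σ K)}
    (hA : ∀ v ∈ A, ∀ k, vecComponent k v ∈ A)
    {ψ : (κ → MvPolynomial σ K) →ₗ[MvPolynomial σ K] MvPolynomial σ K} {m : ℕ}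
    (hψ : ∀ i, (ψ (Pi.single i 1)).IsHomogeneous m) (k : ℕ) :
    (A.restrictScalars K ⊓ vecHomogeneousSubmodule σ κ K k).map (ψ.restrictScalars K) =
      (A.map ψ).restrictScalars K ⊓ homogeneousSubmodule σ K (k + m) := by
  ext p
  constructor
  · rintro ⟨v, ⟨hvA, hv⟩, rfl⟩
    refine ⟨⟨v, hvA, rfl⟩, ?_⟩
    change (ψ v).IsHomogeneous (k + m)
    rw [← vecComponent_eq_self (mem_vecHomogeneousSubmodule.1 hv), map_vecComponent hψ]
    exact homogeneousComponent_isHomogeneous _ _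
  · rintro ⟨⟨v, hvA, rfl⟩, hv⟩
    refine ⟨vecComponent k v, ⟨hA v hvA k,
      mem_vecHomogeneousSubmodule.2 (vecComponent_isHomogeneous k v)⟩, ?_⟩
    exact (map_vecComponent hψ k v).trans (homogeneousComponent_eq_self hv)

theorem finrank_comap_mulLeft_inf {f : MvPolynomial σ K} {d : ℕ} (hf : f.IsHomogeneous d)
    (hf0 : f ≠ 0) {N : Ideal (MvPolynomial σ K)} (hN : ∀ p ∈ N, f ∣ p) (k : ℕ) :
    Module.finrank K ↥(Submodule.restrictScalars K
        (Submodule.comap (LinearMap.mulLeft (MvPolynomial σ K) f) N) ⊓ homogeneousSubmodule σ K k) =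
      Module.finrank K ↥(N.restrictScalars K ⊓ homogeneousSubmodule σ K (k + d)) := by
  have hmap :
      (Submodule.restrictScalars K
        (Submodule.comap (LinearMap.mulLeft (MvPolynomial σ K) f) N) ⊓
          homogeneousSubmodule σ K k).map (LinearMap.mulLeft K f) =
        N.restrictScalars K ⊓ homogeneousSubmodule σ K (k + d) := by
    ext p
    constructor
    · rintro ⟨g, ⟨hgN, hg⟩, rfl⟩
      exact ⟨hgN, add_comm d k ▸ hf.mul hg⟩
    · rintro ⟨hpN, hp⟩
      obtain ⟨g, rfl⟩ := hN p hpN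
      exact ⟨g, ⟨hpN, isHomogeneous_of_mul_right hf hf0 (mul_comm f g ▸ hp)⟩, rfl⟩
  rw [← hmap]
  exact (Submodule.equivMapOfInjective _ (mul_right_injective₀ hf0) _).finrank_eq

variable [Finite σ]

instance [Finite κ] (k : ℕ) : FiniteDimensional K (vecHomogeneousSubmodule σ κ K k) :=
  Module.Finite.iff_fg.2 (Submodule.fg_pi fun _ => homogeneousSubmodule_fg σ K k)

theorem finrank_inf_vecHomogeneousSubmodule_span {ι : Type*} [Fintype ι]
    {r : ι → κ → MvPolynomial σ K} {e : ι → ℕ} (hr : ∀ i j, (r i j).IsHomogeneous (e i))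
    (hli : LinearIndependent (MvPolynomial σ K) r) {k : ℕ} (hk : ∀ i, e i ≤ k) :
    Module.finrank K ↥((Submodule.span (MvPolynomial σ K) (Set.range r)).restrictScalars K ⊓
        vecHomogeneousSubmodule σ κ K k) =
      ∑ i, Module.finrank K (homogeneousSubmodule σ K (k - e i)) := by
  let comb : (∀ i, homogeneousSubmodule σ K (k - e i)) →ₗ[K] κ → MvPolynomial σ K :=
    (Fintype.linearCombination (MvPolynomial σ K) r).restrictScalars K ∘ₗ
      LinearMap.pi fun i => Submodule.subtype _ ∘ₗ LinearMap.proj i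
  have hcomb_apply (a) : comb a = ∑ i, (a i : MvPolynomial σ K) • r i := rfl
  have hcomb : Function.Injective comb := by
    refine (injective_iff_map_eq_zero comb).2 fun a ha => funext fun i => Subtype.ext ?_
    exact Fintype.linearIndependent_iff.1 hli _ ha i
  have hrange : LinearMap.range comb =
      (Submodule.span (MvPolynomial σ K) (Set.range r)).restrictScalars K ⊓
        vecHomogeneousSubmodule σ κ K k := by
    ext v
    constructor
    · rintro ⟨a, rfl⟩
      refine ⟨(Submodule.mem_span_range_iff_exists_fun _).2 ⟨_, (hcomb_apply a).symm⟩,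
        mem_vecHomogeneousSubmodule.2 fun j => ?_⟩
      rw [hcomb_apply, Finset.sum_apply]
      refine IsHomogeneous.sum _ _ _ fun i _ => ?_
      have hmul := IsHomogeneous.mul (a i).2 (hr i j)
      rwa [Nat.sub_add_cancel (hk i)] at hmul
    · rintro ⟨hspan, hv⟩
      obtain ⟨a, rfl⟩ := (Submodule.mem_span_range_iff_exists_fun _).1 hspan
      refine ⟨fun i => ⟨_, homogeneousComponent_mem (k - e i) (a i)⟩, ?_⟩
      rw [hcomb_apply, ← vecComponent_eq_self (mem_vecHomogeneousSubmodule.1 hv), map_sum]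
      refine Finset.sum_congr rfl fun i _ => ?_
      rw [← vecComponent_smul (hr i), Nat.sub_add_cancel (hk i)]
  rw [← hrange, LinearMap.finrank_range_of_inj hcomb, Module.finrank_pi_fintype]

theorem finrank_vecHomogeneousSubmodule [Fintype κ] (k : ℕ) :
    Module.finrank K (vecHomogeneousSubmodule σ κ K k) =
      Fintype.card κ * Module.finrank K (homogeneousSubmodule σ K k) := by
  classical
  have h := finrank_inf_vecHomogeneousSubmodule_span (e := fun _ : κ => 0)
    (r := ⇑(Pi.basisFun (MvPolynomial σ K) κ)) (fun i j => by
      rw [Pi.basisFun_apply, Pi.single_apply]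
      split_ifs
      exacts [isHomogeneous_one _ _, isHomogeneous_zero _ _ _])
    (Pi.basisFun _ κ).linearIndependent (k := k) (fun _ => k.zero_le)
  rwa [Module.Basis.span_eq, Submodule.restrictScalars_top, top_inf_eq, Finset.sum_const,
    Finset.card_univ, smul_eq_mul, Nat.sub_zero] at h

theorem hilbertFun_add_finrank_inf (I : Ideal (MvPolynomial σ K)) (k : ℕ) :
    hilbertFun I k + Module.finrank K ↥(I.restrictScalars K ⊓ homogeneousSubmodule σ K k) =
      Module.finrank K (homogeneousSubmodule σ K k) := by
  have h := finrank_map_add_finrank_inf_ker (homogeneousSubmodule σ K k)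
    (Submodule.mkQ (I.restrictScalars K))
  rwa [Submodule.ker_mkQ, inf_comm] at h

theorem finrank_inf_vecHomogeneousSubmodule [Finite κ] [DecidableEq κ]
    {A : Submodule (MvPolynomial σ K) (κ → MvPolynomial σ K)}
    (hA : ∀ v ∈ A, ∀ k, vecComponent k v ∈ A)
    {ψ : (κ → MvPolynomial σ K) →ₗ[MvPolynomial σ K] MvPolynomial σ K} {m : ℕ}
    (hψ : ∀ i, (ψ (Pi.single i 1)).IsHomogeneous m) (k : ℕ) :
    Module.finrank K ↥((A.map ψ).restrictScalars K ⊓ homogeneousSubmodule σ K (k + m)) +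
        Module.finrank K ↥((A ⊓ LinearMap.ker ψ).restrictScalars K ⊓
          vecHomogeneousSubmodule σ κ K k) =
      Module.finrank K ↥(A.restrictScalars K ⊓ vecHomogeneousSubmodule σ κ K k) := by
  have h := finrank_map_add_finrank_inf_ker
    (A.restrictScalars K ⊓ vecHomogeneousSubmodule σ κ K k) (ψ.restrictScalars K)
  rwa [map_inf_vecHomogeneousSubmodule hA hψ, inf_right_comm] at h

end GradedDimension

section SurfaceDimension

variable {f : S4} {d e1 e2 e3 k : ℕ} {ρ1 ρ2 : Fin 4 → S4}

theorem milnor4_add_four_mul (hf : f.IsHomogeneous d) (k : ℕ) :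
    milnor4 f (k + (d - 1)) + 4 * (k + 3).choose 3 = (k + (d - 1) + 3).choose 3 + arDim f k := by
  have hcokernel := hilbertFun_add_finrank_inf (JacIdeal f) (k + (d - 1))
  have hkernel := finrank_inf_vecHomogeneousSubmodule (K := ℂ) (A := ⊤) (fun _ _ _ => trivial)
    (jacPair_single_isHomogeneous hf) k
  have hrange : (⊤ : Submodule S4 (Fin 4 → S4)).map (jacPair f) = JacIdeal f := by
    ext p
    rw [JacIdeal, Ideal.mem_span_range_iff_exists_fun]
    simp [jacPair]
  rw [hrange, top_inf_eq, Submodule.restrictScalars_top, top_inf_eq,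
    finrank_vecHomogeneousSubmodule, finrank_homogeneousSubmodule, Fintype.card_fin] at hkernel
  rw [finrank_homogeneousSubmodule] at hcokernel
  change milnor4 f _ + _ = _ at hcokernel
  change _ + arDim f k = _ at hkernel
  lia

theorem finrank_inf_span_minimalPair (hmin : MinimalPair f ρ1 ρ2 e1 e2) (hf : f.IsHomogeneous d)
    (hk1 : e1 ≤ k) (hk2 : e2 ≤ k) :
    Module.finrank ℂ ↥((Submodule.span S4 (Set.range ![ρ1, ρ2])).restrictScalars ℂ ⊓
        vecHomogeneousSubmodule (Fin 4) (Fin 4) ℂ k) =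
      (k - e1 + 3).choose 3 + (k - e2 + 3).choose 3 := by
  rw [finrank_inf_vecHomogeneousSubmodule_span (r := ![ρ1, ρ2]) (e := ![e1, e2])
    (Fin.forall_fin_two.2 ⟨hmin.2.2.1, hmin.2.2.2.2.2.1⟩) (hmin.linearIndependent hf)
    (Fin.forall_fin_two.2 ⟨hk1, hk2⟩)]
  simp [finrank_homogeneousSubmodule]

theorem arDim_add_hilbertFun_saitoIdeal (hf : f.IsHomogeneous d) (hred : Squarefree f)
    (hmin : MinimalPair f ρ1 ρ2 e1 e2) (htame : TamePair f ρ1 ρ2) (he3 : e1 + e2 + e3 + 1 = d)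
    (hk1 : e1 ≤ k) (hk2 : e2 ≤ k) (hk3 : e3 ≤ k) :
    arDim f k + hilbertFun (saitoIdeal f ρ1 ρ2) (k - e3) =
      (k - e1 + 3).choose 3 + (k - e2 + 3).choose 3 + (k - e3 + 3).choose 3 := by
  have hexact := finrank_inf_vecHomogeneousSubmodule (K := ℂ)
    (fun ρ hρ => vecComponent_mem_AR4 (ρ := ρ) hf hρ)
    (saitoDet_single_isHomogeneous hmin.2.2.1 hmin.2.2.2.2.2.1) k
  rw [AR4_inf_ker_saitoDet (by lia) hf hred.ne_zero hmin htame,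
    finrank_inf_span_minimalPair hmin hf hk1 hk2,
    show k + (e1 + e2 + 1) = k - e3 + d by lia,
    ← finrank_comap_mulLeft_inf hf hred.ne_zero (by
      rintro _ ⟨ρ, hρ, rfl⟩
      exact dvd_saitoDet hf hred hmin.1 hmin.2.2.2.2.1 hρ)] at hexact
  have hquotient := hilbertFun_add_finrank_inf (saitoIdeal f ρ1 ρ2) (k - e3)
  rw [finrank_homogeneousSubmodule] at hquotient
  change Module.finrank ℂ ↥((saitoIdeal f ρ1 ρ2).restrictScalars ℂ ⊓
    homogeneousSubmodule (Fin 4) ℂ (k - e3)) + _ = arDim f k at hexact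
  lia

theorem IsFreeWith.arDim_eq (hfree : IsFreeWith f e1 e2 e3) (hk1 : e1 ≤ k) (hk2 : e2 ≤ k)
    (hk3 : e3 ≤ k) :
    arDim f k = (k - e1 + 3).choose 3 + (k - e2 + 3).choose 3 + (k - e3 + 3).choose 3 := by
  obtain ⟨-, -, r1, r2, r3, hr1, hr2, hr3, hh1, hh2, hh3, hgen, hind⟩ := hfree
  have hli : LinearIndependent S4 ![r1, r2, r3] := by
    refine Fintype.linearIndependent_iff.2 fun g hg => ?_
    rw [Fin.sum_univ_three] at hg
    obtain ⟨h0, h1, h2⟩ := hind _ _ _ hg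
    exact Fin.forall_fin_succ.2 ⟨h0, Fin.forall_fin_two.2 ⟨h1, h2⟩⟩
  have hspan : AR4 f = Submodule.span S4 (Set.range ![r1, r2, r3]) := by
    refine le_antisymm (fun ρ hρ => ?_) (Submodule.span_le.2 (Set.range_subset_iff.2 ?_))
    · obtain ⟨a, b, c, rfl⟩ := hgen ρ hρ
      exact (Submodule.mem_span_range_iff_exists_fun _).2 ⟨![a, b, c], by simp [Fin.sum_univ_three]⟩
    · exact Fin.forall_fin_succ.2 ⟨hr1, Fin.forall_fin_two.2 ⟨hr2, hr3⟩⟩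
  have hdim := finrank_inf_vecHomogeneousSubmodule_span (r := ![r1, r2, r3]) (e := ![e1, e2, e3])
    (Fin.forall_fin_succ.2 ⟨hh1, Fin.forall_fin_two.2 ⟨hh2, hh3⟩⟩) hli
    (Fin.forall_fin_succ.2 ⟨hk1, Fin.forall_fin_two.2 ⟨hk2, hk3⟩⟩)
  rw [← hspan] at hdim
  refine Eq.trans hdim ?_
  simp [finrank_homogeneousSubmodule, Fin.sum_univ_three]

end SurfaceDimension

section Freeness

variable {f : S4} {d e1 e2 e3 : ℕ} {ρ1 ρ2 : Fin 4 → S4}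

theorem exists_saitoDet_eq_of_saitoIdeal_eq_top (hf : f.IsHomogeneous d)
    (h1h : VecHomog ρ1 e1) (h2h : VecHomog ρ2 e2) (he3 : e1 + e2 + e3 + 1 = d)
    (htop : saitoIdeal f ρ1 ρ2 = ⊤) : ∃ ρ3 ∈ AR4 f, VecHomog ρ3 e3 ∧ saitoDet ρ1 ρ2 ρ3 = f := by
  obtain ⟨σ, hσ, hdet⟩ := (Ideal.eq_top_iff_one _).1 htop
  rw [LinearMap.mulLeft_apply, mul_one] at hdet
  refine ⟨vecComponent e3 σ, vecComponent_mem_AR4 hf hσ e3, vecComponent_isHomogeneous e3 σ, ?_⟩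
  rw [map_vecComponent (saitoDet_single_isHomogeneous h1h h2h), hdet,
    show e3 + (e1 + e2 + 1) = d by lia]
  exact homogeneousComponent_eq_self hf

theorem isFreeWith_of_saitoDet_eq (hf : f.IsHomogeneous d) (hred : Squarefree f)
    (hmin : MinimalPair f ρ1 ρ2 e1 e2)
    (hker : AR4 f ⊓ LinearMap.ker (saitoDet ρ1 ρ2) = Submodule.span S4 (Set.range ![ρ1, ρ2]))
    {ρ3 : Fin 4 → S4} (h3 : ρ3 ∈ AR4 f) (h3h : VecHomog ρ3 e3)
    (hdet : saitoDet ρ1 ρ2 ρ3 = f) : IsFreeWith f e1 e2 e3 := by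
  have hli := LinearIndependent.pair_iff.1 (hmin.linearIndependent hf)
  obtain ⟨h1, -, h1h, -, h2, h2h, h12, -, he2⟩ := hmin
  have h23 : e2 ≤ e3 := he2 ρ3 h3 e3 h3h fun a ha => hred.ne_zero <| by
    rw [← hdet, ha, map_smul, saitoDet_left, smul_zero]
  refine ⟨h12, h23, ρ1, ρ2, ρ3, h1, h2, h3, h1h, h2h, h3h, fun ρ hρ => ?_, fun a b c h0 => ?_⟩
  · obtain ⟨c, hc⟩ := dvd_saitoDet hf hred h1 h2 hρ
    have hspan : ρ - c • ρ3 ∈ Submodule.span S4 (Set.range ![ρ1, ρ2]) := by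
      rw [← hker]
      refine ⟨sub_mem hρ (Submodule.smul_mem _ c h3), LinearMap.mem_ker.2 ?_⟩
      rw [map_sub, map_smul, hdet, hc, smul_eq_mul, mul_comm, sub_self]
    rw [Matrix.range_cons, Matrix.range_cons, Matrix.range_empty, Set.union_empty] at hspan
    obtain ⟨a, b, hab⟩ := Submodule.mem_span_pair.1 hspan
    exact ⟨a, b, c, (sub_eq_iff_eq_add.1 hab.symm)⟩
  · have hc : c = 0 := by
      have hcf := congrArg (saitoDet ρ1 ρ2) h0
      rw [map_add, map_add, map_smul, map_smul, map_smul, saitoDet_left, saitoDet_right, hdet,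
        smul_zero, smul_zero, zero_add, zero_add, map_zero, smul_eq_mul] at hcf
      exact (mul_eq_zero.1 hcf).resolve_right hred.ne_zero
    subst hc
    rw [zero_smul, add_zero] at h0
    exact ⟨(hli a b h0).1, (hli a b h0).2, rfl⟩

theorem isFreeWith_of_saitoIdeal_eq_top (hf : f.IsHomogeneous d) (hred : Squarefree f)
    (hmin : MinimalPair f ρ1 ρ2 e1 e2)
    (hker : AR4 f ⊓ LinearMap.ker (saitoDet ρ1 ρ2) = Submodule.span S4 (Set.range ![ρ1, ρ2]))
    (he3 : e1 + e2 + e3 + 1 = d) (htop : saitoIdeal f ρ1 ρ2 = ⊤) : IsFreeWith f e1 e2 e3 := by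
  obtain ⟨ρ3, h3, h3h, hdet⟩ :=
    exists_saitoDet_eq_of_saitoIdeal_eq_top hf hmin.2.2.1 hmin.2.2.2.2.2.1 he3 htop
  exact isFreeWith_of_saitoDet_eq hf hred hmin hker h3 h3h hdet

end Freeness

section Asymptotics

open Filter

theorem nonneg_of_eventually_nonneg_mul_add {R : Type*} [Ring R] [LinearOrder R]
    [IsStrictOrderedRing R] [Archimedean R] {A B : R}
    (h : ∀ᶠ k : ℕ in atTop, 0 ≤ A * k + B) : 0 ≤ A := by
  by_contra! hA
  obtain ⟨n, hn⟩ := Archimedean.arch B (neg_pos.2 hA)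
  obtain ⟨k, hk, hnk⟩ := (h.and (eventually_gt_atTop n)).exists
  rw [nsmul_eq_mul, mul_neg, Nat.cast_comm] at hn
  have hlt : A * k < A * n := mul_lt_mul_of_neg_left (Nat.cast_lt.2 hnk) hA
  exact ((add_lt_add_of_lt_of_le hlt hn).trans_eq (add_neg_cancel _)).not_ge hk

theorem exists_eventually_defect_eq {f : S4} {d e1 e2 e3 : ℕ} {a b : ℤ}
    (hf : f.IsHomogeneous d) (he3 : e1 + e2 + e3 + 1 = d)
    (hHilb : ∀ᶠ k : ℕ in atTop, (milnor4 f k : ℤ) = a * k + b) :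
    ∃ B : ℤ, ∀ᶠ k : ℕ in atTop, ∀ δ : ℕ,
      arDim f k + δ = (k - e1 + 3).choose 3 + (k - e2 + 3).choose 3 + (k - e3 + 3).choose 3 →
      6 * (δ : ℤ) =
        6 * (((e1 : ℤ) + e2 + e3) ^ 2 - ((e1 : ℤ) * e2 + (e1 : ℤ) * e3 + (e2 : ℤ) * e3) - a) * k
          + B := by
  have hm : ((d - 1 : ℕ) : ℤ) = e1 + e2 + e3 := by lia
  refine ⟨6 * (-a * (d - 1 : ℕ) - b) + (((d - 1 : ℕ) : ℤ) + 1) * ((d - 1 : ℕ) + 2) *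
    ((d - 1 : ℕ) + 3) - 24 + (1 - e1) * (2 - e1) * (3 - e1) + (1 - e2) * (2 - e2) * (3 - e2) +
    (1 - e3) * (2 - e3) * (3 - e3), ?_⟩
  filter_upwards [(tendsto_add_atTop_nat (d - 1)).eventually hHilb, eventually_ge_atTop e1,
    eventually_ge_atTop e2, eventually_ge_atTop e3] with k hk hk1 hk2 hk3 δ hδ
  have hmilnor := milnor4_add_four_mul hf k
  have hC := six_mul_choose_three k
  have hCm := six_mul_choose_three (k + (d - 1))
  have hC1 := six_mul_choose_three (k - e1)
  have hC2 := six_mul_choose_three (k - e2)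
  have hC3 := six_mul_choose_three (k - e3)
  rw [Nat.cast_sub hk1] at hC1
  rw [Nat.cast_sub hk2] at hC2
  rw [Nat.cast_sub hk3] at hC3
  rw [Nat.cast_add, hm] at hk hCm
  zify at hmilnor hδ
  rw [hm]
  linear_combination 6 * hmilnor + 6 * hδ - 6 * hk + hCm - 4 * hC + hC1 + hC2 + hC3

end Asymptotics

theorem thm_1_4_general (f : S4) (d e1 e2 e3 : ℕ) (ρ1 ρ2 : Fin 4 → S4)
    (hf : f.IsHomogeneous d) (hred : Squarefree f)
    (hmin : MinimalPair f ρ1 ρ2 e1 e2) (htame : TamePair f ρ1 ρ2)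
    (he3 : e1 + e2 + e3 + 1 = d) (a b : ℤ)
    (hHilb : ∃ N : ℕ, ∀ k : ℕ, N ≤ k → (milnor4 f k : ℤ) = a * k + b) :
    a ≤ ((e1 : ℤ) + e2 + e3) ^ 2 - ((e1 : ℤ) * e2 + (e1 : ℤ) * e3 + (e2 : ℤ) * e3) ∧
    (a = ((e1 : ℤ) + e2 + e3) ^ 2 - ((e1 : ℤ) * e2 + (e1 : ℤ) * e3 + (e2 : ℤ) * e3) ↔
      IsFreeWith f e1 e2 e3) := by
  obtain ⟨B, hB⟩ := exists_eventually_defect_eq hf he3 (Filter.eventually_atTop.2 hHilb)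
  set τ := ((e1 : ℤ) + e2 + e3) ^ 2 - ((e1 : ℤ) * e2 + (e1 : ℤ) * e3 + (e2 : ℤ) * e3)
  have hker := AR4_inf_ker_saitoDet (by lia) hf hred.ne_zero hmin htame
  have hlarge := Filter.eventually_ge_atTop (e1 + e2 + e3)
  have hδ : ∀ᶠ k : ℕ in Filter.atTop,
      6 * (hilbertFun (saitoIdeal f ρ1 ρ2) (k - e3) : ℤ) = 6 * (τ - a) * k + B := by
    filter_upwards [hB, hlarge] with k hk hkl
    exact hk _ (arDim_add_hilbertFun_saitoIdeal hf hred hmin htame he3 (by lia) (by lia) (by lia))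
  have hle : a ≤ τ := by
    have hnonneg := nonneg_of_eventually_nonneg_mul_add
      (hδ.mono fun k hk => (mul_nonneg (by simp) (Int.natCast_nonneg _)).trans_eq hk)
    linarith
  refine ⟨hle, fun ha => ?_, fun hfree => hle.antisymm ?_⟩
  · obtain ⟨k, hk, hkB⟩ := (hδ.and (Filter.eventually_ge_atTop (e3 + B.natAbs))).exists
    rw [ha, sub_self, mul_zero, zero_mul, zero_add] at hk
    exact isFreeWith_of_saitoIdeal_eq_top hf hred hmin hker he3
      (saitoIdeal_eq_top hker (hmin.linearIndependent hf) (k := k - e3) (by lia))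
  · have hzero : ∀ᶠ k : ℕ in Filter.atTop, 0 ≤ -(6 * (τ - a)) * k + -B := by
      filter_upwards [hB, hlarge] with k hk hkl
      linear_combination -hk 0 (hfree.arDim_eq (by lia) (by lia) (by lia))
    linarith [nonneg_of_eventually_nonneg_mul_add hzero]

/-- **Theorem 1.4.** For a tame surface with `e1 + 2e2 ≤ d - 1` and one-dimensional singular
locus with `deg Σ = a` (the leading coefficient of the Hilbert polynomial of `M(f)`), one has
`deg Σ ≤ s₁² - s₂`, with equality iff `D` is free (with exponents `e1, e2, e3`). -/
theorem thm_1_4 (f : S4) (d e1 e2 e3 : ℕ) (ρ1 ρ2 : Fin 4 → S4)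
    (hd : 1 ≤ d) (hf : f.IsHomogeneous d) (hred : Squarefree f)
    (hmin : MinimalPair f ρ1 ρ2 e1 e2) (htame : TamePair f ρ1 ρ2)
    (he3 : e1 + e2 + e3 + 1 = d)
    (hdeg : e1 + 2 * e2 ≤ d - 1) (a b : ℤ)
    (hHilb : ∃ N : ℕ, ∀ k : ℕ, N ≤ k → (milnor4 f k : ℤ) = a * k + b) :
    a ≤ ((e1 : ℤ) + e2 + e3) ^ 2 - ((e1 : ℤ) * e2 + (e1 : ℤ) * e3 + (e2 : ℤ) * e3) ∧
    (a = ((e1 : ℤ) + e2 + e3) ^ 2 - ((e1 : ℤ) * e2 + (e1 : ℤ) * e3 + (e2 : ℤ) * e3) ↔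
      IsFreeWith f e1 e2 e3) :=
  thm_1_4_general f d e1 e2 e3 ρ1 ρ2 hf hred hmin htame he3 a b hHilb
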